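/- arXiv:0804.1733 — 3 statements merged into one kernel-verified Lean document; each statement's English description precedes it below -/
import Mathlib

section
/- Let B be an envelope of the Banach algebra A, X a Banach B-bimodule, and D : A → X a bounded derivation (with respect to the restricted A-actions). The formulas b·(L, R) = (a ↦ b·L(a), a ↦ R(ab)) and (L, R)·b = (a ↦ L(ba), a ↦ R(a)·b) make the space Δ(X) of double centralizers from A into X a Banach B-bimodule, and the map D̃ : B → Δ(X) defined by D̃(b) = (𝓛(b), 𝓡(b)), where 𝓛(b)(a) = D(ba) − b·D(a) and 𝓡(b)(a) = D(ab) − D(a)·b, is a bounded derivation satisfying D̃(ι(a)) = ι_X(D(a)) for all a ∈ A (where ι : A → B is the inclusion); that is, the push-out diagram commutes. -/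
noncomputable section

/-- A Banach `A`-bimodule structure on a Banach space `X`: bounded bilinear left and right
actions (encoded as continuous linear maps `l`, `r`, where `l a x = a·x` and `r a x = x·a`)
satisfying `(ab)·x = a·(b·x)`, `x·(ab) = (x·a)·b` and `(a·x)·b = a·(x·b)`. -/
structure BanachBimodule (A X : Type*) [NonUnitalNormedRing A] [NormedSpace ℂ A]
    [NormedAddCommGroup X] [NormedSpace ℂ X] where
  l : A →L[ℂ] X →L[ℂ] X
  r : A →L[ℂ] X →L[ℂ] X
  l_mul : ∀ a b x, l (a * b) x = l a (l b x)
  r_mul : ∀ a b x, r (a * b) x = r b (r a x)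
  l_r : ∀ a b x, r b (l a x) = l a (r b x)

variable {A X : Type*} [NonUnitalNormedRing A] [NormedSpace ℂ A]
  [IsScalarTower ℂ A A] [SMulCommClass ℂ A A] [CompleteSpace A]
  [NormedAddCommGroup X] [NormedSpace ℂ X] [CompleteSpace X]

/-- `(S, T)` is a double centralizer from `A` into `X`:
`S(αa) = S(α)·a`, `T(aα) = a·T(α)` and `a·S(α) = T(a)·α`. -/
def IsDoubleCentralizer (M : BanachBimodule A X) (S T : A →L[ℂ] X) : Prop :=
  (∀ α a : A, S (α * a) = M.r a (S α)) ∧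
  (∀ a α : A, T (a * α) = M.l a (T α)) ∧
  (∀ a α : A, M.l a (S α) = M.r α (T a))

/-- The canonical bounded linear map `ι_X : x ↦ (L_x, R_x)` where `L_x a = x·a`,
`R_x a = a·x`. -/
def iotaDC (M : BanachBimodule A X) : X →L[ℂ] (A →L[ℂ] X) × (A →L[ℂ] X) :=
  M.r.flip.prod M.l.flip

/-- `B` is an *envelope* of `A`: `A` is a two-sided ideal of `B` with bounded injective
inclusion `incl : A → B be` (an algebra homomorphism), the products `ba` and `ab`
(`b ∈ B`, `a ∈ A`) are given by `lmul b a` and `rmul b a` inside `A`, and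
`max (‖ba‖, ‖ab‖) ≤ C·‖a‖·‖b‖` for some `C > 0`. -/
structure Envelope (A B : Type*) [NonUnitalNormedRing A] [NormedSpace ℂ A]
    [NonUnitalNormedRing B] [NormedSpace ℂ B] where
  incl : A →L[ℂ] B
  incl_mul : ∀ a c : A, incl (a * c) = incl a * incl c
  incl_inj : Function.Injective incl
  lmul : B →L[ℂ] A →L[ℂ] A
  rmul : B →L[ℂ] A →L[ℂ] A
  incl_lmul : ∀ (b : B) (a : A), incl (lmul b a) = b * incl a
  incl_rmul : ∀ (b : B) (a : A), incl (rmul b a) = incl a * b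
  norm_bound : ∃ C > 0, ∀ (b : B) (a : A), max ‖lmul b a‖ ‖rmul b a‖ ≤ C * ‖a‖ * ‖b‖

variable {B : Type*} [NonUnitalNormedRing B] [NormedSpace ℂ B]
  [IsScalarTower ℂ B B] [SMulCommClass ℂ B B] [CompleteSpace B]

/-- Restriction of a Banach `B`-bimodule structure along the inclusion `A → B`,
making `X` a Banach `A`-bimodule. -/
def BanachBimodule.restrict (M : BanachBimodule B X) (E : Envelope A B) :
    BanachBimodule A X where
  l := M.l.comp E.incl
  r := M.r.comp E.incl
  l_mul := by
    intro a b x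
    simp only [ContinuousLinearMap.comp_apply, E.incl_mul, M.l_mul]
  r_mul := by
    intro a b x
    simp only [ContinuousLinearMap.comp_apply, E.incl_mul, M.r_mul]
  l_r := by
    intro a b x
    simp only [ContinuousLinearMap.comp_apply, M.l_r]

/-- The left `B`-action `b·(L, R) = (a ↦ b·L(a), a ↦ R(ab))` on pairs. -/
def bSmulLeft (E : Envelope A B) (M : BanachBimodule B X) (b : B)
    (p : (A →L[ℂ] X) × (A →L[ℂ] X)) : (A →L[ℂ] X) × (A →L[ℂ] X) :=
  ((M.l b).comp p.1, p.2.comp (E.rmul b))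

/-- The right `B`-action `(L, R)·b = (a ↦ L(ba), a ↦ R(a)·b)` on pairs. -/
def bSmulRight (E : Envelope A B) (M : BanachBimodule B X)
    (p : (A →L[ℂ] X) × (A →L[ℂ] X)) (b : B) : (A →L[ℂ] X) × (A →L[ℂ] X) :=
  (p.1.comp (E.lmul b), (M.r b).comp p.2)

/-- The push-out map `D̃ : b ↦ (𝓛(b), 𝓡(b))`, with `𝓛(b)(a) = D(ba) − b·D(a)` and
`𝓡(b)(a) = D(ab) − D(a)·b`. -/
def pushOut (E : Envelope A B) (M : BanachBimodule B X) (D : A →L[ℂ] X) (b : B) :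
    (A →L[ℂ] X) × (A →L[ℂ] X) :=
  (D.comp (E.lmul b) - (M.l b).comp D, D.comp (E.rmul b) - (M.r b).comp D)

/-!
The space of all pairs of bounded linear maps `A → X` is itself a Banach `B`-bimodule, and in it
`D̃(b) = b·(-D, D) - (-D, D)·b` is an inner derivation: this gives boundedness, linearity and the
derivation law at once. The Leibniz rule for `D` puts the values of `D̃` in `Δ(X)` and makes the
diagram commute. Identities between elements of `A` reduce to associativity in `B`, because the
inclusion is injective.
-/

section

variable {Y : Type*} [NormedAddCommGroup Y] [NormedSpace ℂ Y]

omit [IsScalarTower ℂ A A] [SMulCommClass ℂ A A] [CompleteSpace A] [CompleteSpace X]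
  [IsScalarTower ℂ B B] [SMulCommClass ℂ B B] [CompleteSpace B]

namespace BanachBimodule

/-- Derivations from `A` into a bimodule: `D(ac) = a·D(c) + D(a)·c`. -/
def IsDerivation (M : BanachBimodule A X) (D : A →L[ℂ] X) : Prop :=
  ∀ a c : A, D (a * c) = M.l a (D c) + M.r c (D a)

/-- The inner derivation `a ↦ a·x - x·a` implemented by `x`. -/
def innerDerivation (M : BanachBimodule A X) (x : X) : A →L[ℂ] X :=
  M.l.flip x - M.r.flip x

theorem innerDerivation_apply (M : BanachBimodule A X) (x : X) (a : A) :
    M.innerDerivation x a = M.l a x - M.r a x :=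
  rfl

theorem isDerivation_innerDerivation (M : BanachBimodule A X) (x : X) :
    M.IsDerivation (M.innerDerivation x) := by
  intro a c
  simp only [innerDerivation_apply, M.l_mul, M.r_mul, map_sub, M.l_r]
  abel

theorem exists_bound (M : BanachBimodule A X) :
    ∃ C : ℝ, ∀ (a : A) (x : X), ‖M.l a x‖ ≤ C * ‖a‖ * ‖x‖ ∧ ‖M.r a x‖ ≤ C * ‖a‖ * ‖x‖ :=
  ⟨max ‖M.l‖ ‖M.r‖, fun a x =>
    ⟨(M.l a).le_of_opNorm_le (M.l.le_of_opNorm_le (le_max_left _ _) a) x,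
      (M.r a).le_of_opNorm_le (M.r.le_of_opNorm_le (le_max_right _ _) a) x⟩⟩

/-- For `A`-bimodules `Y` and `X`, the bimodule of pairs `(L, R)` of bounded linear maps `Y → X`,
with `a·(L, R) = (y ↦ a·L(y), y ↦ R(y·a))` and `(L, R)·a = (y ↦ L(a·y), y ↦ R(y)·a)`. The space of
double centralizers sits inside it. -/
def homPair (N : BanachBimodule A Y) (M : BanachBimodule A X) :
    BanachBimodule A ((Y →L[ℂ] X) × (Y →L[ℂ] X)) where
  l := (ContinuousLinearMap.prodMapL ℂ _ _ _ _).comp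
    (((ContinuousLinearMap.compL ℂ Y X X).comp M.l).prod
      ((ContinuousLinearMap.compL ℂ Y Y X).flip.comp N.r))
  r := (ContinuousLinearMap.prodMapL ℂ _ _ _ _).comp
    (((ContinuousLinearMap.compL ℂ Y Y X).flip.comp N.l).prod
      ((ContinuousLinearMap.compL ℂ Y X X).comp M.r))
  l_mul a c p :=
    Prod.ext (ContinuousLinearMap.ext fun y => M.l_mul a c (p.1 y))
      (ContinuousLinearMap.ext fun y => congrArg p.2 (N.r_mul a c y))
  r_mul a c p :=
    Prod.ext (ContinuousLinearMap.ext fun y => congrArg p.1 (N.l_mul a c y))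
      (ContinuousLinearMap.ext fun y => M.r_mul a c (p.2 y))
  l_r _ _ _ := rfl

end BanachBimodule

namespace Envelope

theorem lmul_apply_mul (E : Envelope A B) (b : B) (a c : A) :
    E.lmul b (a * c) = E.lmul b a * c :=
  E.incl_inj (by simp only [E.incl_mul, E.incl_lmul, mul_assoc])

theorem rmul_apply_mul (E : Envelope A B) (b : B) (a c : A) :
    E.rmul b (a * c) = a * E.rmul b c :=
  E.incl_inj (by simp only [E.incl_mul, E.incl_rmul, mul_assoc])

theorem rmul_mul_eq_mul_lmul (E : Envelope A B) (b : B) (a c : A) :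
    E.rmul b a * c = a * E.lmul b c :=
  E.incl_inj (by simp only [E.incl_mul, E.incl_rmul, E.incl_lmul, mul_assoc])

theorem lmul_incl (E : Envelope A B) (a c : A) : E.lmul (E.incl a) c = a * c :=
  E.incl_inj (by rw [E.incl_lmul, E.incl_mul])

theorem rmul_incl (E : Envelope A B) (a c : A) : E.rmul (E.incl a) c = c * a :=
  E.incl_inj (by rw [E.incl_rmul, E.incl_mul])

/-- The ideal `A` as a Banach bimodule over its envelope `B`. -/
def bimodule (E : Envelope A B) : BanachBimodule B A where
  l := E.lmul
  r := E.rmul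
  l_mul b d a := E.incl_inj (by simp only [E.incl_lmul, mul_assoc])
  r_mul b d a := E.incl_inj (by simp only [E.incl_rmul, mul_assoc])
  l_r b d a := E.incl_inj (by simp only [E.incl_rmul, E.incl_lmul, mul_assoc])

end Envelope

theorem homPair_l_eq_bSmulLeft (E : Envelope A B) (M : BanachBimodule B X) (b : B)
    (p : (A →L[ℂ] X) × (A →L[ℂ] X)) :
    (E.bimodule.homPair M).l b p = bSmulLeft E M b p :=
  rfl

theorem homPair_r_eq_bSmulRight (E : Envelope A B) (M : BanachBimodule B X) (b : B)
    (p : (A →L[ℂ] X) × (A →L[ℂ] X)) :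
    (E.bimodule.homPair M).r b p = bSmulRight E M p b :=
  rfl

theorem pushOut_eq_innerDerivation (E : Envelope A B) (M : BanachBimodule B X) (D : A →L[ℂ] X) :
    pushOut E M D = (E.bimodule.homPair M).innerDerivation (-D, D) := by
  ext b a <;>
    simp only [BanachBimodule.innerDerivation_apply, homPair_l_eq_bSmulLeft,
      homPair_r_eq_bSmulRight, pushOut, bSmulLeft, bSmulRight, Prod.fst_sub, Prod.snd_sub,
      ContinuousLinearMap.comp_neg, ContinuousLinearMap.neg_comp, neg_sub_neg]

namespace IsDoubleCentralizer

variable {E : Envelope A B} {M : BanachBimodule B X} {p : (A →L[ℂ] X) × (A →L[ℂ] X)}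

theorem smul_left (hp : IsDoubleCentralizer (M.restrict E) p.1 p.2) (b : B) :
    IsDoubleCentralizer (M.restrict E) (bSmulLeft E M b p).1 (bSmulLeft E M b p).2 := by
  obtain ⟨hL, hR, hLR⟩ := hp
  simp only [BanachBimodule.restrict, ContinuousLinearMap.comp_apply] at hL hR hLR
  refine ⟨fun a c => ?_, fun a c => ?_, fun a c => ?_⟩ <;>
    simp only [BanachBimodule.restrict, bSmulLeft, ContinuousLinearMap.comp_apply]
  · rw [hL, M.l_r]
  · rw [E.rmul_apply_mul, hR]
  · rw [← hLR, E.incl_rmul, M.l_mul]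

theorem smul_right (hp : IsDoubleCentralizer (M.restrict E) p.1 p.2) (b : B) :
    IsDoubleCentralizer (M.restrict E) (bSmulRight E M p b).1 (bSmulRight E M p b).2 := by
  obtain ⟨hL, hR, hLR⟩ := hp
  simp only [BanachBimodule.restrict, ContinuousLinearMap.comp_apply] at hL hR hLR
  refine ⟨fun a c => ?_, fun a c => ?_, fun a c => ?_⟩ <;>
    simp only [BanachBimodule.restrict, bSmulRight, ContinuousLinearMap.comp_apply]
  · rw [E.lmul_apply_mul, hL]
  · rw [hR, M.l_r]
  · rw [hLR, E.incl_lmul, M.r_mul]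

end IsDoubleCentralizer

namespace BanachBimodule.IsDerivation

variable {E : Envelope A B} {M : BanachBimodule B X} {D : A →L[ℂ] X}

theorem apply_mul_of_restrict (hD : (M.restrict E).IsDerivation D) (a c : A) :
    D (a * c) = M.l (E.incl a) (D c) + M.r (E.incl c) (D a) :=
  hD a c

theorem isDoubleCentralizer_pushOut (hD : (M.restrict E).IsDerivation D) (b : B) :
    IsDoubleCentralizer (M.restrict E) (pushOut E M D b).1 (pushOut E M D b).2 := by
  refine ⟨fun a c => ?_, fun a c => ?_, fun a c => ?_⟩ <;>
    simp only [restrict, pushOut, ContinuousLinearMap.comp_apply, sub_apply, map_sub]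
  · rw [E.lmul_apply_mul, hD.apply_mul_of_restrict, hD.apply_mul_of_restrict, E.incl_lmul,
      M.l_mul, map_add, M.l_r]
    abel
  · rw [E.rmul_apply_mul, hD.apply_mul_of_restrict, hD.apply_mul_of_restrict, E.incl_rmul,
      M.r_mul, map_add, M.l_r]
    abel
  · -- `D` applied to `(a * b) * c = a * (b * c)`, both sides expanded by the Leibniz rule.
    have leibniz : M.l (E.incl a) (M.l b (D c)) + M.r (E.incl c) (D (E.rmul b a)) =
        M.l (E.incl a) (D (E.lmul b c)) + M.r (E.incl c) (M.r b (D a)) := by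
      rw [← M.l_mul, ← M.r_mul, ← E.incl_rmul, ← E.incl_lmul,
        ← hD.apply_mul_of_restrict, ← hD.apply_mul_of_restrict, E.rmul_mul_eq_mul_lmul]
    rw [sub_eq_sub_iff_add_eq_add, ← leibniz, add_comm]

theorem pushOut_incl (hD : (M.restrict E).IsDerivation D) (a : A) :
    pushOut E M D (E.incl a) = iotaDC (M.restrict E) (D a) := by
  refine Prod.ext (ContinuousLinearMap.ext fun c => ?_) (ContinuousLinearMap.ext fun c => ?_)
  · change D (E.lmul (E.incl a) c) - M.l (E.incl a) (D c) = M.r (E.incl c) (D a)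
    rw [E.lmul_incl, hD.apply_mul_of_restrict, add_sub_cancel_left]
  · change D (E.rmul (E.incl a) c) - M.r (E.incl a) (D c) = M.l (E.incl c) (D a)
    rw [E.rmul_incl, hD.apply_mul_of_restrict, add_sub_cancel_right]

end BanachBimodule.IsDerivation

theorem statement5_general (E : Envelope A B) (M : BanachBimodule B X) (D : A →L[ℂ] X)
    (hD : ∀ a c : A, D (a * c) = M.l (E.incl a) (D c) + M.r (E.incl c) (D a)) :
    (∀ (b : B) (p : (A →L[ℂ] X) × (A →L[ℂ] X)),
      IsDoubleCentralizer (M.restrict E) p.1 p.2 →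
        IsDoubleCentralizer (M.restrict E) (bSmulLeft E M b p).1 (bSmulLeft E M b p).2 ∧
        IsDoubleCentralizer (M.restrict E) (bSmulRight E M p b).1 (bSmulRight E M p b).2) ∧
    (∀ (b₁ b₂ : B) (p : (A →L[ℂ] X) × (A →L[ℂ] X)),
      bSmulLeft E M (b₁ * b₂) p = bSmulLeft E M b₁ (bSmulLeft E M b₂ p) ∧
      bSmulRight E M p (b₁ * b₂) = bSmulRight E M (bSmulRight E M p b₁) b₂ ∧
      bSmulRight E M (bSmulLeft E M b₁ p) b₂ = bSmulLeft E M b₁ (bSmulRight E M p b₂)) ∧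
    (∃ C : ℝ, ∀ (b : B) (p : (A →L[ℂ] X) × (A →L[ℂ] X)),
      ‖bSmulLeft E M b p‖ ≤ C * ‖b‖ * ‖p‖ ∧ ‖bSmulRight E M p b‖ ≤ C * ‖b‖ * ‖p‖) ∧
    (∀ b : B, IsDoubleCentralizer (M.restrict E) (pushOut E M D b).1 (pushOut E M D b).2) ∧
    (∀ b₁ b₂ : B, pushOut E M D (b₁ + b₂) = pushOut E M D b₁ + pushOut E M D b₂) ∧
    (∀ (c : ℂ) (b : B), pushOut E M D (c • b) = c • pushOut E M D b) ∧
    (∃ K : ℝ, ∀ b : B, ‖pushOut E M D b‖ ≤ K * ‖b‖) ∧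
    (∀ b₁ b₂ : B, pushOut E M D (b₁ * b₂) =
      bSmulLeft E M b₁ (pushOut E M D b₂) + bSmulRight E M (pushOut E M D b₁) b₂) ∧
    (∀ a : A, pushOut E M D (E.incl a) = iotaDC (M.restrict E) (D a)) := by
  have hD' : (M.restrict E).IsDerivation D := hD
  let P := E.bimodule.homPair M
  let δ := P.innerDerivation (-D, D)
  have hδ : pushOut E M D = δ := pushOut_eq_innerDerivation E M D
  refine ⟨fun b p hp => ⟨hp.smul_left b, hp.smul_right b⟩,
    fun b₁ b₂ p => ⟨P.l_mul b₁ b₂ p, P.r_mul b₁ b₂ p, P.l_r b₁ b₂ p⟩,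
    P.exists_bound, hD'.isDoubleCentralizer_pushOut, ?_, ?_, ?_, ?_, hD'.pushOut_incl⟩
  · exact hδ ▸ map_add δ
  · exact hδ ▸ map_smul δ
  · exact ⟨‖δ‖, hδ ▸ δ.le_opNorm⟩
  · exact hδ ▸ P.isDerivation_innerDerivation (-D, D)

end

/-- The `B`-actions make `Δ(X)` a Banach `B`-bimodule, and the push-out map
`D̃ : B → Δ(X)` is a bounded derivation with `D̃(ι(a)) = ι_X(D(a))` for `a ∈ A`. -/
theorem statement5 (E : Envelope A B) (M : BanachBimodule B X) (D : A →L[ℂ] X)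
    (hD : ∀ a c : A, D (a * c) = M.l (E.incl a) (D c) + M.r (E.incl c) (D a)) :
    -- the actions leave `Δ(X)` invariant:
    (∀ (b : B) (p : (A →L[ℂ] X) × (A →L[ℂ] X)),
      IsDoubleCentralizer (M.restrict E) p.1 p.2 →
        IsDoubleCentralizer (M.restrict E) (bSmulLeft E M b p).1 (bSmulLeft E M b p).2 ∧
        IsDoubleCentralizer (M.restrict E) (bSmulRight E M p b).1 (bSmulRight E M p b).2) ∧
    -- the bimodule axioms hold:
    (∀ (b₁ b₂ : B) (p : (A →L[ℂ] X) × (A →L[ℂ] X)),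
      bSmulLeft E M (b₁ * b₂) p = bSmulLeft E M b₁ (bSmulLeft E M b₂ p) ∧
      bSmulRight E M p (b₁ * b₂) = bSmulRight E M (bSmulRight E M p b₁) b₂ ∧
      bSmulRight E M (bSmulLeft E M b₁ p) b₂ = bSmulLeft E M b₁ (bSmulRight E M p b₂)) ∧
    -- the actions are bounded (Banach bimodule):
    (∃ C : ℝ, ∀ (b : B) (p : (A →L[ℂ] X) × (A →L[ℂ] X)),
      ‖bSmulLeft E M b p‖ ≤ C * ‖b‖ * ‖p‖ ∧ ‖bSmulRight E M p b‖ ≤ C * ‖b‖ * ‖p‖) ∧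
    -- `D̃` takes values in `Δ(X)`:
    (∀ b : B, IsDoubleCentralizer (M.restrict E) (pushOut E M D b).1 (pushOut E M D b).2) ∧
    -- `D̃` is bounded and linear:
    (∀ b₁ b₂ : B, pushOut E M D (b₁ + b₂) = pushOut E M D b₁ + pushOut E M D b₂) ∧
    (∀ (c : ℂ) (b : B), pushOut E M D (c • b) = c • pushOut E M D b) ∧
    (∃ K : ℝ, ∀ b : B, ‖pushOut E M D b‖ ≤ K * ‖b‖) ∧
    -- `D̃` is a derivation:
    (∀ b₁ b₂ : B, pushOut E M D (b₁ * b₂) =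
      bSmulLeft E M b₁ (pushOut E M D b₂) + bSmulRight E M (pushOut E M D b₁) b₂) ∧
    -- the push-out diagram commutes:
    (∀ a : A, pushOut E M D (E.incl a) = iotaDC (M.restrict E) (D a)) :=
  statement5_general E M D hD
end
end

section
/- Let B be an envelope of the Banach algebra A, X a Banach B-bimodule, D : A → X a bounded derivation, and D̃ : B → Δ(X) the push-out derivation given by D̃(b) = (a ↦ D(ba) − b·D(a), a ↦ D(ab) − D(a)·b). Suppose the closed linear span of {ac : a, c ∈ A} equals A. If D̃ is inner, i.e. there exists a double centralizer (S, T) ∈ Δ(X) with D̃(b) = (S, T)·b − b·(S, T) for all b ∈ B (actions b·(L, R) = (a ↦ b·L(a), a ↦ R(ab)), (L, R)·b = (a ↦ L(ba), a ↦ R(a)·b)), then D(a) = S(a) − T(a) for all a ∈ A. -/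
noncomputable section

variable {A X : Type*} [NonUnitalNormedRing A] [NormedSpace ℂ A]
  [IsScalarTower ℂ A A] [SMulCommClass ℂ A A] [CompleteSpace A]
  [NormedAddCommGroup X] [NormedSpace ℂ X] [CompleteSpace X]

variable {B : Type*} [NonUnitalNormedRing B] [NormedSpace ℂ B]
  [IsScalarTower ℂ B B] [SMulCommClass ℂ B B] [CompleteSpace B]

/-!
On `A` itself the derivation rule gives `D̃(a) = (c ↦ D(a)·c, c ↦ c·D(a)) = ι_X (D a)`. Innerness
therefore says `D(a)·c = S(ac) - a·S(c)` and `a·D(c) = T(a)·c - T(ac)`. Add the two: since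
`a·S(c) = T(a)·c`, what remains is `D = S - T` on products. Both sides are bounded and linear, and
products span a dense subspace.
-/

section

omit [IsScalarTower ℂ A A] [SMulCommClass ℂ A A] [CompleteSpace A] [CompleteSpace X]
  [IsScalarTower ℂ B B] [SMulCommClass ℂ B B] [CompleteSpace B]

theorem Envelope.lmul_incl_s8 (E : Envelope A B) (a c : A) : E.lmul (E.incl a) c = a * c :=
  E.incl_inj <| by rw [E.incl_lmul, E.incl_mul]

theorem Envelope.rmul_incl_s8 (E : Envelope A B) (a c : A) : E.rmul (E.incl a) c = c * a :=
  E.incl_inj <| by rw [E.incl_rmul, E.incl_mul]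

/-- `D` is a derivation from `A` into the bimodule `X`; continuity is part of the type of `D`. -/
def IsDerivation (M : BanachBimodule A X) (D : A →L[ℂ] X) : Prop :=
  ∀ a c : A, D (a * c) = M.l a (D c) + M.r c (D a)

theorem pushOut_incl {E : Envelope A B} {M : BanachBimodule B X} {D : A →L[ℂ] X}
    (hD : IsDerivation (M.restrict E) D) (a : A) :
    pushOut E M D (E.incl a) = iotaDC (M.restrict E) (D a) := by
  ext c
  · change D (E.lmul (E.incl a) c) - (M.restrict E).l a (D c) = (M.restrict E).r c (D a)
    rw [E.lmul_incl_s8, hD, add_sub_cancel_left]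
  · change D (E.rmul (E.incl a) c) - (M.restrict E).r a (D c) = (M.restrict E).l c (D a)
    rw [E.rmul_incl_s8, hD, add_sub_cancel_right]

theorem bSmulRight_sub_bSmulLeft_incl_fst_apply (E : Envelope A B) (M : BanachBimodule B X)
    (p : (A →L[ℂ] X) × (A →L[ℂ] X)) (a c : A) :
    (bSmulRight E M p (E.incl a) - bSmulLeft E M (E.incl a) p).1 c =
      p.1 (a * c) - (M.restrict E).l a (p.1 c) := by
  rw [← E.lmul_incl_s8]
  rfl

theorem bSmulRight_sub_bSmulLeft_incl_snd_apply (E : Envelope A B) (M : BanachBimodule B X)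
    (p : (A →L[ℂ] X) × (A →L[ℂ] X)) (a c : A) :
    (bSmulRight E M p (E.incl a) - bSmulLeft E M (E.incl a) p).2 c =
      (M.restrict E).r a (p.2 c) - p.2 (c * a) := by
  rw [← E.rmul_incl_s8]
  rfl

theorem pushOut_incl_eq_iff {E : Envelope A B} {M : BanachBimodule B X} {D S T : A →L[ℂ] X}
    (hD : IsDerivation (M.restrict E) D) (a : A) :
    pushOut E M D (E.incl a) =
        bSmulRight E M (S, T) (E.incl a) - bSmulLeft E M (E.incl a) (S, T) ↔
      ∀ c : A, (M.restrict E).r c (D a) = S (a * c) - (M.restrict E).l a (S c) ∧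
        (M.restrict E).l c (D a) = (M.restrict E).r a (T c) - T (c * a) := by
  simp only [pushOut_incl hD, Prod.ext_iff, ContinuousLinearMap.ext_iff, ← forall_and,
    bSmulRight_sub_bSmulLeft_incl_fst_apply, bSmulRight_sub_bSmulLeft_incl_snd_apply]
  rfl

theorem IsDerivation.apply_mul_eq_sub {M : BanachBimodule A X} {D S T : A →L[ℂ] X}
    (hD : IsDerivation M D) {a c : A} (hbal : M.l a (S c) = M.r c (T a))
    (hS : M.r c (D a) = S (a * c) - M.l a (S c))
    (hT : M.l a (D c) = M.r c (T a) - T (a * c)) :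
    D (a * c) = S (a * c) - T (a * c) :=
  calc
    D (a * c) = M.l a (D c) + M.r c (D a) := hD a c
    _ = (M.r c (T a) - T (a * c)) + (S (a * c) - M.l a (S c)) := by rw [hT, hS]
    _ = S (a * c) - T (a * c) := by rw [hbal]; abel

theorem statement8_general (M : BanachBimodule A X) {D S T : A →L[ℂ] X} (hD : IsDerivation M D)
    (hspan : (Submodule.span ℂ {x : A | ∃ a c : A, a * c = x}).topologicalClosure = ⊤)
    (hbal : ∀ a c : A, M.l a (S c) = M.r c (T a))
    (hinner : ∀ a c : A, M.r c (D a) = S (a * c) - M.l a (S c) ∧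
      M.l c (D a) = M.r a (T c) - T (c * a)) (a : A) :
    D a = S a - T a := by
  have hprod : Set.EqOn D ⇑(S - T) {x : A | ∃ a c : A, a * c = x} := by
    rintro _ ⟨a, c, rfl⟩
    exact hD.apply_mul_eq_sub (hbal a c) (hinner a c).1 (hinner c a).2
  have hdense := Submodule.dense_iff_topologicalClosure_eq_top.mpr hspan
  exact DFunLike.congr_fun (ContinuousLinearMap.ext_on hdense hprod) a

end

/-- If the closed linear span of products is all of `A` and the push-out derivation `D̃` is
inner, implemented by a double centralizer `(S, T)`, then `D(a) = S(a) − T(a)` on `A`. -/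
theorem statement8 (E : Envelope A B) (M : BanachBimodule B X) (D : A →L[ℂ] X)
    (hD : ∀ a c : A, D (a * c) = M.l (E.incl a) (D c) + M.r (E.incl c) (D a))
    (hspan : (Submodule.span ℂ {x : A | ∃ a c : A, a * c = x}).topologicalClosure = ⊤)
    (S T : A →L[ℂ] X)
    (hST : IsDoubleCentralizer (M.restrict E) S T)
    (hinner : ∀ b : B,
      pushOut E M D b = bSmulRight E M (S, T) b - bSmulLeft E M b (S, T)) :
    ∀ a : A, D a = S a - T a :=
  statement8_general (M.restrict E) hD hspan hST.2.2 fun a ↦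
    (pushOut_incl_eq_iff hD a).mp (hinner (E.incl a))
end
end

section
/- Let A be a commutative Banach algebra and let B be a commutative envelope of A which is weakly amenable. If the closed linear span of {ac : a, c ∈ A} equals A, then A is weakly amenable; indeed, every bounded derivation D : A → A* is zero. -/
noncomputable section

variable {A X : Type*} [NonUnitalNormedRing A] [NormedSpace ℂ A]
  [IsScalarTower ℂ A A] [SMulCommClass ℂ A A] [CompleteSpace A]
  [NormedAddCommGroup X] [NormedSpace ℂ X] [CompleteSpace X]

variable {B : Type*} [NonUnitalNormedRing B] [NormedSpace ℂ B]
  [IsScalarTower ℂ B B] [SMulCommClass ℂ B B] [CompleteSpace B]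

/-!
Let `R` be a commutative envelope of `I`. A derivation `D : I → I*` extends to `R`: the defect
`S b a = D (b a) - b · D a` takes values in the `I`-module maps `I → I*`, and it is a derivation in
`b` because a bounded `I`-module map is automatically `R`-linear when products span a dense
subspace of `I`. Testing `S` against `a, c ∈ I` gives derivations `b ↦ (y ↦ S b a (y c))` from `R`
to `R*`. These are inner, hence zero by commutativity, so `S = 0`. For `b ∈ I` we have
`S b a = D b · a`, so `D b` vanishes on products.
-/

section WeakAmenability

variable {𝕜 R M N : Type*}

/-- An algebra is essential if the linear span of its products is dense. -/
def IsEssential (𝕜 R : Type*) [Semiring 𝕜] [AddCommMonoid R] [Module 𝕜 R] [Mul R]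
    [TopologicalSpace R] : Prop :=
  Dense (Submodule.span 𝕜 {x : R | ∃ a c : R, a * c = x} : Set R)

theorem IsEssential.clm_ext [Semiring 𝕜] [AddCommMonoid R] [Module 𝕜 R] [Mul R]
    [TopologicalSpace R] [AddCommMonoid N] [Module 𝕜 N] [TopologicalSpace N] [T2Space N]
    (hR : IsEssential 𝕜 R) {f g : R →L[𝕜] N} (h : ∀ a c, f (a * c) = g (a * c)) : f = g := by
  refine ContinuousLinearMap.ext_on hR ?_
  rintro _ ⟨a, c, rfl⟩
  exact h a c

variable [NontriviallyNormedField 𝕜] [NonUnitalNormedRing R] [NormedSpace 𝕜 R]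
  [IsScalarTower 𝕜 R R] [SMulCommClass 𝕜 R R] [SeminormedAddCommGroup M] [NormedSpace 𝕜 M]

/-- A bounded derivation of a normed algebra `R` into its dual, the identity
`D (a c) = a · D c + D a · c` being written out with the dual actions `(a · φ) x = φ (x a)` and
`(φ · c) x = φ (c x)`. -/
def IsDualDerivation (D : R →L[𝕜] R →L[𝕜] 𝕜) : Prop :=
  ∀ a c : R, D (a * c) = (D c).comp ((ContinuousLinearMap.mul 𝕜 R).flip a) +
    (D a).comp (ContinuousLinearMap.mul 𝕜 R c)

theorem isDualDerivation_iff {D : R →L[𝕜] R →L[𝕜] 𝕜} :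
    IsDualDerivation D ↔ ∀ a c x, D (a * c) x = D c (x * a) + D a (c * x) := by
  simp [IsDualDerivation, ContinuousLinearMap.ext_iff]

variable (𝕜 R) in
/-- Weak amenability: every bounded derivation into the dual is inner, that is, of the form
`x ↦ x · φ - φ · x`. -/
def IsWeaklyAmenable : Prop :=
  ∀ D : R →L[𝕜] R →L[𝕜] 𝕜, IsDualDerivation D →
    ∃ φ : R →L[𝕜] 𝕜, ∀ x : R, D x = φ.comp ((ContinuousLinearMap.mul 𝕜 R).flip x) -
      φ.comp (ContinuousLinearMap.mul 𝕜 R x)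

theorem IsWeaklyAmenable.dualDerivation_eq_zero (hR : IsWeaklyAmenable 𝕜 R)
    (hcomm : ∀ x y : R, x * y = y * x) {D : R →L[𝕜] R →L[𝕜] 𝕜} (hD : IsDualDerivation D) :
    D = 0 := by
  obtain ⟨φ, hφ⟩ := hR D hD
  ext x y
  simp [hφ, hcomm x y]

theorem IsWeaklyAmenable.derivation_apply_action_eq_zero (hR : IsWeaklyAmenable 𝕜 R)
    (hcomm : ∀ x y : R, x * y = y * x) {π : R →L[𝕜] M →L[𝕜] M}
    (hπ : ∀ b y m, π (b * y) m = π b (π y m)) {T : R →L[𝕜] M →L[𝕜] 𝕜}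
    (hT : ∀ b y m, T (b * y) m = T b (π y m) + T y (π b m)) (b y : R) (m : M) :
    T b (π y m) = 0 := by
  let orbit : R →L[𝕜] M := π.flip m
  let Δ : R →L[𝕜] R →L[𝕜] 𝕜 := ((ContinuousLinearMap.compL 𝕜 R M 𝕜).flip orbit).comp T
  have hΔ_apply (b y : R) : Δ b y = T b (π y m) := rfl
  have hΔ : IsDualDerivation Δ := by
    rw [isDualDerivation_iff]
    intro b z y
    simp only [hΔ_apply]
    rw [hT, hcomm y b, hπ z, hπ b, add_comm]
  rw [← hΔ_apply, hR.dualDerivation_eq_zero hcomm hΔ, zero_apply, zero_apply]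

end WeakAmenability

namespace Envelope

variable {I R : Type*} [NonUnitalNormedRing I] [NormedSpace ℂ I]
  [NonUnitalNormedRing R] [NormedSpace ℂ R] (E : Envelope I R)

theorem lmul_incl_s14 (x a : I) : E.lmul (E.incl x) a = x * a :=
  E.incl_inj <| by rw [E.incl_lmul, E.incl_mul]

theorem mul_lmul (b y : R) (a : I) : E.lmul (b * y) a = E.lmul b (E.lmul y a) :=
  E.incl_inj <| by simp only [E.incl_lmul, mul_assoc]

theorem lmul_mul (b : R) (a c : I) : E.lmul b (a * c) = E.lmul b a * c :=
  E.incl_inj <| by simp only [E.incl_lmul, E.incl_mul, mul_assoc]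

/-- The extension to `R` of a derivation `D : I → I*`, namely
`b ↦ (a ↦ D (b a) - b · D a)`. For `b ∈ I` its value is the multiplier `a ↦ D b · a`, so this is
an extension once `φ ∈ I*` is identified with the map `a ↦ φ · a`. -/
def extension (D : I →L[ℂ] I →L[ℂ] ℂ) : R →L[ℂ] I →L[ℂ] I →L[ℂ] ℂ :=
  (ContinuousLinearMap.compL ℂ I I (I →L[ℂ] ℂ) D -
    ((ContinuousLinearMap.compL ℂ I I ℂ).comp D).flip).comp E.lmul

theorem extension_apply (D : I →L[ℂ] I →L[ℂ] ℂ) (b : R) (a x : I) :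
    E.extension D b a x = D (E.lmul b a) x - D a (E.lmul b x) :=
  rfl

section Commutative

variable (hcomm : ∀ x y : R, x * y = y * x)
include E hcomm

theorem mul_comm_of_commutative (a c : I) : a * c = c * a :=
  E.incl_inj <| by rw [E.incl_mul, E.incl_mul, hcomm]

theorem lmul_mul_eq_mul_lmul (b : R) (a c : I) : E.lmul b a * c = a * E.lmul b c :=
  E.incl_inj <| by
    rw [E.incl_mul, E.incl_mul, E.incl_lmul, E.incl_lmul, hcomm b, mul_assoc]

theorem extension_mul (D : I →L[ℂ] I →L[ℂ] ℂ) (b y : R) (a x : I) :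
    E.extension D (b * y) a x =
      E.extension D b (E.lmul y a) x + E.extension D y a (E.lmul b x) := by
  have hswap : E.lmul (b * y) x = E.lmul y (E.lmul b x) := by rw [hcomm, E.mul_lmul]
  simp only [extension_apply, hswap, E.mul_lmul b y a, sub_add_sub_cancel]

variable [IsScalarTower ℂ I I] [SMulCommClass ℂ I I] {D : I →L[ℂ] I →L[ℂ] ℂ}
  (hD : IsDualDerivation D)
include hD

theorem extension_apply_mul (b : R) (a c x : I) :
    E.extension D b (a * c) x = E.extension D b a (c * x) := by
  have hleibniz := isDualDerivation_iff.mp hD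
  have hact : E.lmul b (c * x) = c * E.lmul b x := by
    rw [E.lmul_mul, E.lmul_mul_eq_mul_lmul hcomm]
  rw [extension_apply, extension_apply, E.lmul_mul, hleibniz, hleibniz, hact,
    E.lmul_mul_eq_mul_lmul hcomm b x a]
  ring

theorem extension_incl_apply (b a x : I) :
    E.extension D (E.incl b) a x = D b (a * x) := by
  have hleibniz := isDualDerivation_iff.mp hD
  rw [extension_apply, E.lmul_incl_s14, E.lmul_incl_s14, hleibniz,
    E.mul_comm_of_commutative hcomm x b, add_sub_cancel_left]

theorem extension_apply_lmul (hI : IsEssential ℂ I) (b y : R) (a x : I) :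
    E.extension D b (E.lmul y a) x = E.extension D b a (E.lmul y x) := by
  suffices h : (E.extension D b).comp (E.lmul y) =
      ((ContinuousLinearMap.compL ℂ I I ℂ).flip (E.lmul y)).comp (E.extension D b) from
    DFunLike.congr_fun (DFunLike.congr_fun h a) x
  refine hI.clm_ext fun a c => ?_
  ext x
  calc E.extension D b (E.lmul y (a * c)) x
      = E.extension D b (a * E.lmul y c) x := by
        rw [E.lmul_mul, E.lmul_mul_eq_mul_lmul hcomm]
    _ = E.extension D b a (E.lmul y c * x) := E.extension_apply_mul hcomm hD b a _ x
    _ = E.extension D b a (c * E.lmul y x) := by rw [E.lmul_mul_eq_mul_lmul hcomm]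
    _ = E.extension D b (a * c) (E.lmul y x) := (E.extension_apply_mul hcomm hD b a c _).symm

theorem extension_eq_zero [IsScalarTower ℂ R R] [SMulCommClass ℂ R R]
    (hR : IsWeaklyAmenable ℂ R) (hI : IsEssential ℂ I) : E.extension D = 0 := by
  ext b a : 2
  refine hI.clm_ext fun y c => ?_
  have hderiv (b y : R) (x : I) : (E.extension D).flip a (b * y) x =
      (E.extension D).flip a b (E.lmul y x) + (E.extension D).flip a y (E.lmul b x) := by
    simp only [ContinuousLinearMap.flip_apply]
    rw [E.extension_mul hcomm, E.extension_apply_lmul hcomm hD hI]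
  rw [← E.lmul_incl_s14]
  exact hR.derivation_apply_action_eq_zero hcomm E.mul_lmul hderiv b (E.incl y) c

end Commutative

end Envelope

theorem statement14_general {I R : Type*} [NonUnitalNormedRing I] [NormedSpace ℂ I]
    [IsScalarTower ℂ I I] [SMulCommClass ℂ I I] [NonUnitalNormedRing R] [NormedSpace ℂ R]
    [IsScalarTower ℂ R R] [SMulCommClass ℂ R R] (hcomm : ∀ x y : R, x * y = y * x)
    (E : Envelope I R) (hR : IsWeaklyAmenable ℂ R) (hI : IsEssential ℂ I)
    {D : I →L[ℂ] I →L[ℂ] ℂ} (hD : IsDualDerivation D) : D = 0 := by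
  ext b : 1
  refine hI.clm_ext fun a x => ?_
  rw [← E.extension_incl_apply hcomm hD, E.extension_eq_zero hcomm hD hR hI]
  rfl

/-- If `A` is a commutative Banach algebra, `B` is a commutative weakly amenable envelope of
`A`, and the closed linear span of `{ac : a, c ∈ A}` is all of `A`, then every bounded
derivation `D : A → A*` is zero (so `A` is weakly amenable). Here the dual actions are
`(a·φ)(x) = φ(xa)` and `(φ·a)(x) = φ(ax)`. -/
theorem statement14
    (hAcomm : ∀ a c : A, a * c = c * a) (hBcomm : ∀ x y : B, x * y = y * x)
    (E : Envelope A B)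
    (hBwa : ∀ D : B →L[ℂ] B →L[ℂ] ℂ,
      (∀ x y : B, D (x * y) = (D y).comp ((ContinuousLinearMap.mul ℂ B).flip x) +
        (D x).comp (ContinuousLinearMap.mul ℂ B y)) →
      ∃ φ : B →L[ℂ] ℂ, ∀ x : B,
        D x = φ.comp ((ContinuousLinearMap.mul ℂ B).flip x) -
          φ.comp (ContinuousLinearMap.mul ℂ B x))
    (hspan : (Submodule.span ℂ {x : A | ∃ a c : A, a * c = x}).topologicalClosure = ⊤) :
    ∀ D : A →L[ℂ] A →L[ℂ] ℂ,
      (∀ a c : A, D (a * c) = (D c).comp ((ContinuousLinearMap.mul ℂ A).flip a) +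
        (D a).comp (ContinuousLinearMap.mul ℂ A c)) →
      D = 0 :=
  fun _ hD => statement14_general hBcomm E hBwa
    (Submodule.dense_iff_topologicalClosure_eq_top.mpr hspan) hD
end
end
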